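/- Let G be a real-rational n×n transfer function matrix that is strictly negative imaginary (SNI). Then G(0) > G(∞) in the Loewner order (G(0) − G(∞) is positive definite), where G(∞) = lim_{s→∞} G(s). -/

import Mathlib

open Matrix Polynomial Filter Topology
open scoped ComplexOrder

noncomputable section

namespace NIControl

/-- Evaluate a real-rational function at a complex point (junk value at poles). -/
def evalC (f : RatFunc ℝ) (s : ℂ) : ℂ :=
  f.eval (algebraMap ℝ ℂ) s

/-- `s` is a pole of the real-rational function `f`
(the reduced denominator vanishes at `s`). -/
def IsPoleAt (f : RatFunc ℝ) (s : ℂ) : Prop :=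
  f.denom.eval₂ (algebraMap ℝ ℂ) s = 0

variable {n : ℕ}

/-- Pointwise evaluation of a real-rational transfer matrix at a complex point. -/
def evalM (G : Matrix (Fin n) (Fin n) (RatFunc ℝ)) (s : ℂ) : Matrix (Fin n) (Fin n) ℂ :=
  Matrix.of fun i j => evalC (G i j) s

/-- Pointwise evaluation of a real-rational transfer matrix at a real point. -/
def evalR (G : Matrix (Fin n) (Fin n) (RatFunc ℝ)) (x : ℝ) : Matrix (Fin n) (Fin n) ℝ :=
  Matrix.of fun i j => (G i j).eval (RingHom.id ℝ) x

/-- Value at `s = ∞` of a proper real-rational function. -/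
def atInfinity (f : RatFunc ℝ) : ℝ :=
  if f.num.degree = f.denom.degree then f.num.leadingCoeff / f.denom.leadingCoeff else 0

/-- The instantaneous gain `G(∞)` of a proper real-rational transfer matrix. -/
def evalInf (G : Matrix (Fin n) (Fin n) (RatFunc ℝ)) : Matrix (Fin n) (Fin n) ℝ :=
  Matrix.of fun i j => atInfinity (G i j)

/-- The matrix `G` has a pole at `s`. -/
def HasPole (G : Matrix (Fin n) (Fin n) (RatFunc ℝ)) (s : ℂ) : Prop :=
  ∃ i j, IsPoleAt (G i j) s

/-- All entries of `G` are proper rational functions. -/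
def Proper (G : Matrix (Fin n) (Fin n) (RatFunc ℝ)) : Prop :=
  ∀ i j, (G i j).num.degree ≤ (G i j).denom.degree

/-- All entries of `G` are strictly proper rational functions. -/
def StrictlyProper (G : Matrix (Fin n) (Fin n) (RatFunc ℝ)) : Prop :=
  ∀ i j, (G i j).num.degree < (G i j).denom.degree

/-- The pole of `G` at the origin (if any) is at most simple. -/
def NoDoubleOriginPole (G : Matrix (Fin n) (Fin n) (RatFunc ℝ)) : Prop :=
  ∀ i j, (G i j).denom.rootMultiplicity 0 ≤ 1

/-- Membership in `RH∞`: proper and no poles in the closed right-half complex plane. -/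
def MemRHinf {m : Type*} [Fintype m] (G : Matrix m m (RatFunc ℝ)) : Prop :=
  (∀ i j, (G i j).num.degree ≤ (G i j).denom.degree) ∧
  ∀ s : ℂ, 0 ≤ s.re → ∀ i j, ¬ IsPoleAt (G i j) s

/-- The point `jω` on the imaginary axis. -/
def jw (ω : ℝ) : ℂ := Complex.I * (ω : ℂ)

/-- The negative-imaginary frequency kernel `j (M − M*)`. -/
def niKer (M : Matrix (Fin n) (Fin n) ℂ) : Matrix (Fin n) (Fin n) ℂ :=
  Complex.I • (M - Mᴴ)

/-- Negative imaginary (NI) real-rational transfer matrix. -/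
def IsNI (G : Matrix (Fin n) (Fin n) (RatFunc ℝ)) : Prop :=
  Proper G ∧
  (∀ s : ℂ, 0 < s.re → ¬ HasPole G s) ∧
  (∀ ω : ℝ, 0 < ω → ¬ HasPole G (jw ω) → (niKer (evalM G (jw ω))).PosSemidef) ∧
  (∀ ω : ℝ, 0 < ω → HasPole G (jw ω) →
    ∃ R : Matrix (Fin n) (Fin n) ℂ, R.PosSemidef ∧
      Tendsto (fun s : ℂ => (s - jw ω) • Complex.I • evalM G s) (𝓝[≠] jw ω) (𝓝 R)) ∧
  (HasPole G 0 →
    (∀ k : ℕ, 3 ≤ k → Tendsto (fun s : ℂ => s ^ k • evalM G s) (𝓝[≠] 0) (𝓝 0)) ∧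
    ∃ R : Matrix (Fin n) (Fin n) ℂ, R.PosSemidef ∧
      Tendsto (fun s : ℂ => s ^ 2 • evalM G s) (𝓝[≠] 0) (𝓝 R))

/-- Strictly negative imaginary (SNI) real-rational transfer matrix. -/
def IsSNI (G : Matrix (Fin n) (Fin n) (RatFunc ℝ)) : Prop :=
  MemRHinf G ∧ ∀ ω : ℝ, 0 < ω → (niKer (evalM G (jw ω))).PosDef

/-- Positive real (passive) real-rational transfer matrix. -/
def IsPositiveReal (G : Matrix (Fin n) (Fin n) (RatFunc ℝ)) : Prop :=
  MemRHinf G ∧ ∀ ω : ℝ, 0 ≤ ω → (evalM G (jw ω) + (evalM G (jw ω))ᴴ).PosSemidef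

/-- Output strictly passive real-rational transfer matrix. -/
def IsOSP (G : Matrix (Fin n) (Fin n) (RatFunc ℝ)) : Prop :=
  MemRHinf G ∧ ∃ ε : ℝ, 0 < ε ∧ ∀ ω : ℝ, 0 ≤ ω →
    (evalM G (jw ω) + (evalM G (jw ω))ᴴ -
      (ε : ℂ) • ((evalM G (jw ω))ᴴ * evalM G (jw ω))).PosSemidef

/-- Stability of the positive feedback interconnection `[P, C]`:
`[I; C] (I − P C)⁻¹ [I, P] ∈ RH∞`. -/
def FeedbackStable (P C : Matrix (Fin n) (Fin n) (RatFunc ℝ)) : Prop :=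
  ((1 : Matrix (Fin n) (Fin n) (RatFunc ℝ)) - P * C).det ≠ 0 ∧
  MemRHinf (Matrix.fromBlocks
    (1 - P * C)⁻¹ ((1 - P * C)⁻¹ * P)
    (C * (1 - P * C)⁻¹) (C * (1 - P * C)⁻¹ * P))

/-- All eigenvalues of the complex matrix `M` are real and less than `c`. -/
def eigsRealAndLT (M : Matrix (Fin n) (Fin n) ℂ) (c : ℝ) : Prop :=
  ∀ μ ∈ spectrum ℂ M, μ.im = 0 ∧ μ.re < c

/-- The (real) eigenvalues of the real matrix `M` are all real and its largest
eigenvalue is less than `c`. -/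
def maxEigLT (M : Matrix (Fin n) (Fin n) ℝ) (c : ℝ) : Prop :=
  eigsRealAndLT (M.map (Complex.ofReal)) c

/-- Loewner order `A ≤ B` on real matrices. -/
def LoewnerLE (A B : Matrix (Fin n) (Fin n) ℝ) : Prop := (B - A).PosSemidef

/-- Strict Loewner order `A < B` on real matrices. -/
def LoewnerLT (A B : Matrix (Fin n) (Fin n) ℝ) : Prop := (B - A).PosDef

/-!
For a real vector `x`, the scalar function `q(s) = xᵀ G(s) x` is real on the real axis and has
`Im q ≤ 0` on the positive imaginary axis. Being bounded, it has `Im q ≤ 0` on the whole first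
quadrant by the Phragmén–Lindelöf principle, so by the Cauchy–Riemann equations `q` is nonincreasing
on `[0, ∞)`, whence `q(∞) ≤ q(0)`. Equality would make `q` constant by the identity theorem,
contradicting `Im q < 0` at some frequency. Symmetry of `G(0)` and `G(∞)` comes from letting `ω`
tend to `0` and `∞` in `j (G(jω) - G(jω)*) ≥ 0`.
-/

section HalfPlane

open Asymptotics Bornology Complex Set

variable {f g : ℂ → ℂ}

lemma im_nonpos_of_im_nonpos_on_quadrant_boundary
    (hf : DiffContOnCl ℂ f (Ioi 0 ×ℂ Ioi 0))
    (hbdd : IsBoundedUnder (· ≤ ·) (cobounded ℂ ⊓ 𝓟 (Ioi 0 ×ℂ Ioi 0)) fun z => (f z).im)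
    (hre : ∀ x : ℝ, 0 ≤ x → (f x).im ≤ 0) (him : ∀ y : ℝ, 0 ≤ y → (f (y * I)).im ≤ 0)
    {z : ℂ} (hz_re : 0 ≤ z.re) (hz_im : 0 ≤ z.im) : (f z).im ≤ 0 := by
  have norm_exp_eq (w : ℂ) : ‖exp (-I * f w)‖ = Real.exp (f w).im := by simp [norm_exp]
  have exp_isBigO_one :
      (fun w => exp (-I * f w)) =O[cobounded ℂ ⊓ 𝓟 (Ioi 0 ×ℂ Ioi 0)] fun _ => (1 : ℝ) := by
    simpa only [isBigO_one_iff, norm_exp_eq, Real.isBoundedUnder_le_exp_comp] using hbdd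
  suffices ‖exp (-I * f z)‖ ≤ 1 by simpa only [norm_exp_eq, Real.exp_le_one_iff] using this
  refine PhragmenLindelof.quadrant_I (f := fun w => exp (-I * f w))
    (differentiable_exp.comp_diffContOnCl (hf.const_smul (-I)))
    ⟨0, two_pos, 0, by simpa using exp_isBigO_one⟩ (fun x hx => ?_) (fun y hy => ?_) hz_re hz_im
  · simpa only [norm_exp_eq, Real.exp_le_one_iff] using hre x hx
  · simpa only [norm_exp_eq, Real.exp_le_one_iff] using him y hy

/- By the Cauchy–Riemann equations, the real part of `f'` is the derivative of the imaginary part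
of `f` in the direction `I`. -/
lemma re_deriv_nonpos_of_im_le_above {f' z : ℂ} (hf : HasDerivAt f f' z)
    (him : ∀ᶠ y : ℝ in 𝓝[>] 0, (f (z + y * I)).im ≤ (f z).im) : f'.re ≤ 0 := by
  have vertical_line : HasDerivAt (fun w : ℂ => z + w * I) I ((0 : ℝ) : ℂ) := by
    simpa using ((hasDerivAt_id ((0 : ℝ) : ℂ)).mul_const I).const_add z
  have rotated : HasDerivAt (fun w : ℂ => -I * f (z + w * I)) f' ((0 : ℝ) : ℂ) := by
    refine ((HasDerivAt.comp_of_eq _ hf vertical_line (by simp)).const_mul (-I)).congr_deriv ?_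
    linear_combination -f' * I_mul_I
  have im_line : HasDerivAt (fun y : ℝ => (f (z + y * I)).im) f'.re 0 := by
    simpa using rotated.real_of_complex
  refine le_of_tendsto ((hasDerivWithinAt_iff_tendsto_slope' self_notMem_Ioi).1
    im_line.hasDerivWithinAt) ?_
  filter_upwards [him, self_mem_nhdsWithin] with y hy hy_pos
  rw [slope_def_field]
  exact div_nonpos_of_nonpos_of_nonneg (by simpa using hy) (by simpa using le_of_lt hy_pos)

lemma antitoneOn_re_ofReal_of_im_nonpos (hf : ∀ x : ℝ, 0 ≤ x → DifferentiableAt ℂ f x)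
    (hreal : ∀ x : ℝ, 0 ≤ x → (f x).im = 0)
    (him : ∀ z : ℂ, 0 ≤ z.re → 0 ≤ z.im → (f z).im ≤ 0) :
    AntitoneOn (fun x : ℝ => (f x).re) (Ici 0) := by
  have hderiv (x : ℝ) (hx : 0 ≤ x) : HasDerivAt (fun x : ℝ => (f x).re) (deriv f x).re x :=
    (hf x hx).hasDerivAt.real_of_complex
  refine antitoneOn_of_hasDerivWithinAt_nonpos (f' := fun x => (deriv f x).re) (convex_Ici 0)
    (fun x hx => (hderiv x hx).continuousAt.continuousWithinAt)
    (fun x hx => (hderiv x (interior_subset hx)).hasDerivWithinAt) fun x hx => ?_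
  have hx : 0 ≤ x := interior_subset hx
  refine re_deriv_nonpos_of_im_le_above (hf x hx).hasDerivAt ?_
  filter_upwards [self_mem_nhdsWithin] with y hy
  rw [hreal x hx]
  exact him _ (by simpa using hx) (by simpa using le_of_lt hy)

lemma antitoneOn_re_ofReal_of_im_nonpos_on_imaginary_axis
    (hf : ∀ z : ℂ, 0 ≤ z.re → DifferentiableAt ℂ f z)
    (hbdd : IsBoundedUnder (· ≤ ·) (cobounded ℂ ⊓ 𝓟 {z | 0 ≤ z.re}) fun z => (f z).im)
    (hreal : ∀ x : ℝ, 0 ≤ x → (f x).im = 0) (him : ∀ y : ℝ, 0 < y → (f (y * I)).im ≤ 0) :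
    AntitoneOn (fun x : ℝ => (f x).re) (Ici 0) := by
  have closure_quadrant_subset : closure (Ioi 0 ×ℂ Ioi 0) ⊆ {z : ℂ | 0 ≤ z.re} := fun z hz => by
    rw [closure_reProdIm, closure_Ioi] at hz
    exact hz.1
  have differentiableOn_closure : DifferentiableOn ℂ f (closure (Ioi 0 ×ℂ Ioi 0)) := fun z hz =>
    (hf z (closure_quadrant_subset hz)).differentiableWithinAt
  have bounded_on_quadrant := hbdd.mono (inf_le_inf_left (cobounded ℂ)
    (principal_mono.2 (subset_closure.trans closure_quadrant_subset)))
  have im_nonpos_on_axis (y : ℝ) (hy : 0 ≤ y) : (f (y * I)).im ≤ 0 := by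
    obtain rfl | hy := hy.eq_or_lt
    · simpa using (hreal 0 le_rfl).le
    · exact him y hy
  exact antitoneOn_re_ofReal_of_im_nonpos (fun x hx => hf x (by simpa using hx)) hreal
    fun z hz_re hz_im => im_nonpos_of_im_nonpos_on_quadrant_boundary
      differentiableOn_closure.diffContOnCl bounded_on_quadrant (fun x hx => (hreal x hx).le)
      im_nonpos_on_axis hz_re hz_im

lemma eqOn_of_eventuallyEq_ofReal {U : Set ℂ} (hf : AnalyticOnNhd ℂ f U)
    (hg : AnalyticOnNhd ℂ g U) (hU : IsPreconnected U) {a : ℝ} (ha : (a : ℂ) ∈ U)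
    (hfg : ∀ᶠ x : ℝ in 𝓝[>] a, f x = g x) : EqOn f g U := by
  have ofReal_tendsto : Tendsto ofReal (𝓝[>] a) (𝓝[≠] (a : ℂ)) :=
    continuous_ofReal.continuousWithinAt.tendsto_nhdsWithin fun x hx => by
      simpa using ne_of_gt hx
  exact hf.eqOn_of_preconnected_of_frequently_eq hg hU ha (ofReal_tendsto.frequently hfg.frequently)

theorem re_lt_re_zero_of_im_nonpos_on_imaginary_axis {c : ℂ}
    (hf : AnalyticOnNhd ℂ f {z | 0 ≤ z.re})
    (hlim : Tendsto f (cobounded ℂ ⊓ 𝓟 {z | 0 ≤ z.re}) (𝓝 c))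
    (hreal : ∀ x : ℝ, 0 ≤ x → (f x).im = 0) (him : ∀ y : ℝ, 0 < y → (f (y * I)).im ≤ 0)
    (hne : ∃ y : ℝ, (f (y * I)).im ≠ 0) : c.re < (f 0).re := by
  have bounded_im := ((continuous_im.tendsto c).comp hlim).isBoundedUnder_le
  have antitone_re := antitoneOn_re_ofReal_of_im_nonpos_on_imaginary_axis
    (fun z hz => (hf z hz).differentiableAt) bounded_im hreal him
  have re_tendsto : Tendsto (fun x : ℝ => (f x).re) atTop (𝓝 c.re) := by
    refine (continuous_re.tendsto c).comp (hlim.comp (tendsto_inf.2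
      ⟨RCLike.tendsto_ofReal_atTop_cobounded ℂ, tendsto_principal.2 ?_⟩))
    filter_upwards [eventually_ge_atTop 0] with x hx using by simpa using hx
  have le_re (x : ℝ) (hx : 0 ≤ x) : c.re ≤ (f x).re :=
    le_of_tendsto re_tendsto <| (eventually_ge_atTop x).mono fun y hxy =>
      antitone_re hx (hx.trans hxy) hxy
  refine lt_of_le_of_ne (by simpa using le_re 0 le_rfl) fun re_eq => ?_
  have eq_on_axis (x : ℝ) (hx : 0 < x) : f x = c.re := by
    refine Complex.ext (le_antisymm ?_ (le_re x hx.le)) (by simpa using hreal x hx.le)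
    simpa [re_eq] using antitone_re self_mem_Ici hx.le hx.le
  have eq_const : EqOn f (fun _ => (c.re : ℂ)) {z | 0 ≤ z.re} :=
    eqOn_of_eventuallyEq_ofReal hf analyticOnNhd_const (convex_halfSpace_re_ge 0).isPreconnected
      (a := 0) (by simp) (eventually_mem_nhdsWithin.mono eq_on_axis)
  obtain ⟨y, hy⟩ := hne
  exact hy (by simp [eq_const (show y * I ∈ {z : ℂ | 0 ≤ z.re} by simp)])

end HalfPlane

section RationalFunctions

open Bornology

lemma tendsto_eval_div_pow_cobounded {𝕜 : Type*} [NormedField 𝕜] (p : 𝕜[X]) {N : ℕ}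
    (hp : p.natDegree ≤ N) :
    Tendsto (fun z => p.eval z / z ^ N) (cobounded 𝕜) (𝓝 (p.coeff N)) := by
  have reflect_tendsto :
      Tendsto (fun z => (p.reflect N).eval z⁻¹) (cobounded 𝕜) (𝓝 (p.coeff N)) := by
    have eval_zero : (p.reflect N).eval 0 = p.coeff N := by
      rw [← coeff_zero_eq_eval_zero, coeff_reflect, revAt_le N.zero_le, Nat.sub_zero]
    rw [← eval_zero]
    exact ((p.reflect N).continuous.tendsto 0).comp tendsto_inv₀_cobounded
  refine reflect_tendsto.congr' ?_
  filter_upwards [eventually_ne_cobounded 0] with z hz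
  let := invertibleOfNonzero hz
  rw [eq_div_iff (pow_ne_zero N hz), ← invOf_eq_inv]
  exact eval₂_reflect_mul_pow (RingHom.id 𝕜) z N p hp

lemma tendsto_eval_div_eval_cobounded {𝕜 : Type*} [NormedField 𝕜] {p q : 𝕜[X]} (hq : q ≠ 0)
    (hpq : p.degree ≤ q.degree) :
    Tendsto (fun z => p.eval z / q.eval z) (cobounded 𝕜)
      (𝓝 (p.coeff q.natDegree / q.leadingCoeff)) := by
  refine ((tendsto_eval_div_pow_cobounded p (natDegree_le_natDegree hpq)).div
    (tendsto_eval_div_pow_cobounded q le_rfl) (leadingCoeff_ne_zero.2 hq)).congr' ?_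
  filter_upwards [eventually_ne_cobounded 0] with z hz
  exact div_div_div_cancel_right₀ (pow_ne_zero _ hz) _ _

variable {f : RatFunc ℝ}

lemma atInfinity_eq_coeff_div_leadingCoeff (hf : f.num.degree ≤ f.denom.degree) :
    atInfinity f = f.num.coeff f.denom.natDegree / f.denom.leadingCoeff := by
  rw [atInfinity]
  split_ifs with hdeg
  · rw [leadingCoeff, natDegree_eq_of_degree_eq hdeg]
  · have hlt : f.num.degree < f.denom.natDegree :=
      degree_eq_natDegree f.denom_ne_zero ▸ hf.lt_of_ne hdeg
    rw [coeff_eq_zero_of_degree_lt hlt, zero_div]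

lemma tendsto_evalC_cobounded (hf : f.num.degree ≤ f.denom.degree) :
    Tendsto (evalC f) (cobounded ℂ) (𝓝 (atInfinity f : ℂ)) := by
  have hdenom : f.denom.map (algebraMap ℝ ℂ) ≠ 0 := Polynomial.map_ne_zero f.denom_ne_zero
  have hdegree : (f.num.map (algebraMap ℝ ℂ)).degree ≤ (f.denom.map (algebraMap ℝ ℂ)).degree := by
    simpa only [degree_map] using hf
  simpa [evalC, RatFunc.eval, eval_map, atInfinity_eq_coeff_div_leadingCoeff hf] using!
    tendsto_eval_div_eval_cobounded hdenom hdegree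

lemma analyticAt_evalC {s : ℂ} (hs : ¬ IsPoleAt f s) : AnalyticAt ℂ (evalC f) s :=
  (analyticAt_id.aeval_polynomial f.num).div (analyticAt_id.aeval_polynomial f.denom) hs

lemma evalC_ofReal (f : RatFunc ℝ) (x : ℝ) : evalC f x = ((f.eval (RingHom.id ℝ) x : ℝ) : ℂ) := by
  have eval₂_ofReal (p : ℝ[X]) :
      p.eval₂ (algebraMap ℝ ℂ) x = ((p.eval₂ (RingHom.id ℝ) x : ℝ) : ℂ) := by
    rw [eval₂_id]
    exact eval₂_at_apply (algebraMap ℝ ℂ) x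
  simp [evalC, RatFunc.eval, eval₂_ofReal]

end RationalFunctions

section TransferMatrices

open Bornology Complex

variable {G : Matrix (Fin n) (Fin n) (RatFunc ℝ)}

lemma analyticAt_dotProduct_evalM_mulVec {s : ℂ} (hs : ¬ HasPole G s) (u v : Fin n → ℂ) :
    AnalyticAt ℂ (fun z => u ⬝ᵥ evalM G z *ᵥ v) s := by
  have entry (i j : Fin n) : AnalyticAt ℂ (fun z => evalM G z i j) s :=
    analyticAt_evalC fun hpole => hs ⟨i, j, hpole⟩
  simp only [dotProduct, mulVec]
  fun_prop

lemma continuousAt_evalM {s : ℂ} (hs : ¬ HasPole G s) : ContinuousAt (evalM G) s :=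
  continuousAt_pi.2 fun i => continuousAt_pi.2 fun j =>
    (analyticAt_evalC fun hpole => hs ⟨i, j, hpole⟩).continuousAt

lemma tendsto_evalM_cobounded (hG : Proper G) :
    Tendsto (evalM G) (cobounded ℂ) (𝓝 ((evalInf G).map ofReal)) :=
  tendsto_pi_nhds.2 fun i => tendsto_pi_nhds.2 fun j => tendsto_evalC_cobounded (hG i j)

lemma evalM_ofReal (G : Matrix (Fin n) (Fin n) (RatFunc ℝ)) (x : ℝ) :
    evalM G x = (evalR G x).map ofReal :=
  Matrix.ext fun i j => evalC_ofReal (G i j) x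

lemma ofReal_dotProduct_map_mulVec {m k : Type*} [Fintype m] [Fintype k] (M : Matrix m k ℝ)
    (x : m → ℝ) (y : k → ℝ) :
    (ofReal ∘ x) ⬝ᵥ M.map ofReal *ᵥ (ofReal ∘ y) = ((x ⬝ᵥ M *ᵥ y : ℝ) : ℂ) := by
  simp [dotProduct, mulVec]

lemma dotProduct_niKer_mulVec (M : Matrix (Fin n) (Fin n) ℂ) (v : Fin n → ℂ) :
    star v ⬝ᵥ niKer M *ᵥ v = ((-2 * (star v ⬝ᵥ M *ᵥ v).im : ℝ) : ℂ) := by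
  have adjoint : star v ⬝ᵥ Mᴴ *ᵥ v = star (star v ⬝ᵥ M *ᵥ v) := by
    rw [star_dotProduct, star_mulVec, ← dotProduct_mulVec, conjTranspose_conjTranspose]
  rw [niKer, smul_mulVec, sub_mulVec, dotProduct_smul, dotProduct_sub, adjoint, smul_eq_mul,
    star_def, sub_conj]
  push_cast
  linear_combination 2 * ((star v ⬝ᵥ M *ᵥ v).im : ℂ) * I_mul_I

lemma im_dotProduct_mulVec_nonpos {M : Matrix (Fin n) (Fin n) ℂ} (hM : (niKer M).PosSemidef)
    (v : Fin n → ℂ) : (star v ⬝ᵥ M *ᵥ v).im ≤ 0 := by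
  have quad_nonneg := hM.dotProduct_mulVec_nonneg v
  rw [dotProduct_niKer_mulVec, zero_le_real] at quad_nonneg
  linarith

lemma im_dotProduct_mulVec_neg {M : Matrix (Fin n) (Fin n) ℂ} (hM : (niKer M).PosDef)
    {v : Fin n → ℂ} (hv : v ≠ 0) : (star v ⬝ᵥ M *ᵥ v).im < 0 := by
  have quad_pos := hM.dotProduct_mulVec_pos hv
  rw [dotProduct_niKer_mulVec, zero_lt_real] at quad_pos
  linarith

lemma posSemidef_of_tendsto {ι m 𝕜 : Type*} [RCLike 𝕜] {l : Filter ι} [l.NeBot]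
    {A : ι → Matrix m m 𝕜} {M : Matrix m m 𝕜} (hA : ∀ᶠ i in l, (A i).PosSemidef)
    (hlim : Tendsto A l (𝓝 M)) : M.PosSemidef := by
  constructor
  · exact tendsto_nhds_unique_of_eventuallyEq
      ((continuous_id.matrix_conjTranspose.tendsto M).comp hlim) hlim
      (hA.mono fun i hi => hi.isHermitian)
  · intro v
    have quad_continuous : Continuous fun B : Matrix m m 𝕜 =>
        v.sum fun i vi => v.sum fun j vj => star vi * B i j * vj := by
      unfold Finsupp.sum
      fun_prop
    exact ge_of_tendsto ((quad_continuous.tendsto M).comp hlim) (hA.mono fun i hi => hi.2 v)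

/- For real `M` the kernel `j (M - Mᵀ)` has zero diagonal, so semidefiniteness forces it to
vanish. -/
lemma isSymm_of_posSemidef_niKer {M : Matrix (Fin n) (Fin n) ℝ}
    (hM : (niKer (M.map ofReal)).PosSemidef) : M.IsSymm := by
  have trace_eq_zero : (niKer (M.map ofReal)).trace = 0 := by simp [niKer, trace]
  have niKer_eq_zero := hM.trace_eq_zero_iff.1 trace_eq_zero
  ext i j
  simpa [niKer, sub_eq_zero] using congrFun₂ niKer_eq_zero j i

lemma isSymm_of_tendsto_evalM_jw (hNI : ∀ ω : ℝ, 0 < ω → (niKer (evalM G (jw ω))).PosSemidef)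
    {l : Filter ℝ} [l.NeBot] (hl : ∀ᶠ ω in l, 0 < ω) {M : Matrix (Fin n) (Fin n) ℝ}
    (hlim : Tendsto (fun ω => evalM G (jw ω)) l (𝓝 (M.map ofReal))) : M.IsSymm := by
  have niKer_continuous : Continuous (niKer (n := n)) := by unfold niKer; fun_prop
  exact isSymm_of_posSemidef_niKer <| posSemidef_of_tendsto (hl.mono hNI)
    ((niKer_continuous.tendsto _).comp hlim)

lemma isSymm_evalR_zero (hNI : ∀ ω : ℝ, 0 < ω → (niKer (evalM G (jw ω))).PosSemidef)
    (hpole : ¬ HasPole G 0) : (evalR G 0).IsSymm := by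
  have jw_tendsto : Tendsto jw (𝓝[>] 0) (𝓝 0) := by
    have jw_continuous : Continuous jw := by unfold jw; fun_prop
    simpa [jw] using (jw_continuous.tendsto 0).mono_left nhdsWithin_le_nhds
  refine isSymm_of_tendsto_evalM_jw hNI (l := 𝓝[>] 0) self_mem_nhdsWithin ?_
  rw [← evalM_ofReal, ofReal_zero]
  exact (continuousAt_evalM hpole).tendsto.comp jw_tendsto

lemma isSymm_evalInf (hNI : ∀ ω : ℝ, 0 < ω → (niKer (evalM G (jw ω))).PosSemidef)
    (hproper : Proper G) : (evalInf G).IsSymm := by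
  have jw_tendsto : Tendsto jw atTop (cobounded ℂ) := by
    rw [← tendsto_norm_atTop_iff_cobounded]
    simpa [jw] using tendsto_abs_atTop_atTop
  exact isSymm_of_tendsto_evalM_jw hNI (eventually_gt_atTop 0)
    ((tendsto_evalM_cobounded hproper).comp jw_tendsto)

lemma dotProduct_evalInf_lt_dotProduct_evalR_zero (hG : MemRHinf G) {x : Fin n → ℝ}
    (hNI : ∀ ω : ℝ, 0 < ω → ((ofReal ∘ x) ⬝ᵥ evalM G (jw ω) *ᵥ (ofReal ∘ x)).im ≤ 0)
    (hne : ∃ ω : ℝ, ((ofReal ∘ x) ⬝ᵥ evalM G (jw ω) *ᵥ (ofReal ∘ x)).im ≠ 0) :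
    x ⬝ᵥ evalInf G *ᵥ x < x ⬝ᵥ evalR G 0 *ᵥ x := by
  let q : ℂ → ℂ := fun s => (ofReal ∘ x) ⬝ᵥ evalM G s *ᵥ (ofReal ∘ x)
  have q_ofReal (t : ℝ) : q t = ((x ⬝ᵥ evalR G t *ᵥ x : ℝ) : ℂ) := by
    simp only [q, evalM_ofReal, ofReal_dotProduct_map_mulVec]
  have q_analytic : AnalyticOnNhd ℂ q {s | 0 ≤ s.re} := fun s hs =>
    analyticAt_dotProduct_evalM_mulVec (fun ⟨i, j, hpole⟩ => hG.2 s hs i j hpole) _ _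
  have q_tendsto : Tendsto q (cobounded ℂ) (𝓝 ((x ⬝ᵥ evalInf G *ᵥ x : ℝ) : ℂ)) := by
    rw [← ofReal_dotProduct_map_mulVec]
    have quad_continuous : Continuous fun M : Matrix (Fin n) (Fin n) ℂ =>
        (ofReal ∘ x) ⬝ᵥ M *ᵥ (ofReal ∘ x) := by fun_prop
    exact (quad_continuous.tendsto _).comp (tendsto_evalM_cobounded hG.1)
  have key := re_lt_re_zero_of_im_nonpos_on_imaginary_axis q_analytic
    (q_tendsto.mono_left inf_le_left) (fun t _ => by rw [q_ofReal, ofReal_im])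
    (by simpa only [jw, mul_comm I] using hNI) (by simpa only [jw, mul_comm I] using hne)
  rwa [← ofReal_zero, q_ofReal, ofReal_re, ofReal_re] at key

end TransferMatrices

theorem sni_static_gain_exceeds_instantaneous_gain_general
    {G : Matrix (Fin n) (Fin n) (RatFunc ℝ)} (hG : MemRHinf G)
    (hNI : ∀ ω : ℝ, 0 < ω → (niKer (evalM G (jw ω))).PosSemidef)
    (hstrict : ∃ ω : ℝ, (niKer (evalM G (jw ω))).PosDef) :
    (evalR G 0 - evalInf G).PosDef := by
  have symm_zero : (evalR G 0).IsSymm :=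
    isSymm_evalR_zero hNI fun ⟨i, j, hpole⟩ => hG.2 0 le_rfl i j hpole
  have symm_inf : (evalInf G).IsSymm := isSymm_evalInf hNI hG.1
  refine .of_dotProduct_mulVec_pos (symm_zero.sub symm_inf) fun x hx => ?_
  have hx' : Complex.ofReal ∘ x ≠ 0 := fun h => hx <| funext fun i => by simpa using congrFun h i
  have star_ofReal : star (Complex.ofReal ∘ x) = Complex.ofReal ∘ x := by ext i; simp
  obtain ⟨ω₀, hω₀⟩ := hstrict
  have gain_lt : x ⬝ᵥ evalInf G *ᵥ x < x ⬝ᵥ evalR G 0 *ᵥ x := by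
    refine dotProduct_evalInf_lt_dotProduct_evalR_zero hG (fun ω hω => ?_) ⟨ω₀, ?_⟩
    · simpa only [star_ofReal] using im_dotProduct_mulVec_nonpos (hNI ω hω) (Complex.ofReal ∘ x)
    · simpa only [star_ofReal] using (im_dotProduct_mulVec_neg hω₀ hx').ne
  simpa only [star_trivial, sub_mulVec, dotProduct_sub, sub_pos] using gain_lt

/-- for an SNI system, `G(0) > G(∞)` in the Loewner order. -/
theorem sni_static_gain_exceeds_instantaneous_gain {n : ℕ} (G : Matrix (Fin n) (Fin n) (RatFunc ℝ))
    (hSNI : IsSNI G) :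
    (evalR G 0 - evalInf G).PosDef :=
  sni_static_gain_exceeds_instantaneous_gain_general hSNI.1
    (fun ω hω => (hSNI.2 ω hω).posSemidef) ⟨1, hSNI.2 1 one_pos⟩

end NIControl
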